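/- arXiv:2310.19486 — 2 statements merged into one kernel-verified Lean document; each statement's English description precedes it below -/
import Mathlib

section
/- Let n and s be relatively prime integers with 2 ≤ n < s, and write s = n·m + k with m ≥ 1 and 1 ≤ k ≤ n−1. Then in the braid group B_n the element δ^s is conjugate to δ·(U_2U_3⋯U_n)^m·U_{a_1}·⋯·U_{a_{k−1}}, where a_i = ⌈n·i/k⌉ for 1 ≤ i ≤ k−1 (the product U_{a_1}⋯U_{a_{k−1}} being the empty product 1 when k = 1). -/
/-- The braid relations on `m` generators (so that `σ_1, …, σ_m` present the braid
group `B_{m+1}`); generator `i : Fin m` corresponds to `σ_{i+1}`. -/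
def braidRels (m : ℕ) : Set (FreeGroup (Fin m)) :=
  {r | ∃ i j : Fin m, (i.val + 2 ≤ j.val ∨ j.val + 2 ≤ i.val) ∧
        r = FreeGroup.of i * FreeGroup.of j * (FreeGroup.of i)⁻¹ * (FreeGroup.of j)⁻¹}
  ∪ {r | ∃ i j : Fin m, (i.val + 1 = j.val ∨ j.val + 1 = i.val) ∧
        r = FreeGroup.of i * FreeGroup.of j * FreeGroup.of i *
            (FreeGroup.of j * FreeGroup.of i * FreeGroup.of j)⁻¹}

/-- The braid group `B n` on `n` strands, presented with generators `σ_1, …, σ_{n-1}`. -/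
abbrev BraidGroup (n : ℕ) : Type := PresentedGroup (braidRels (n - 1))

namespace BraidGroup

/-- The Artin generator `σ_i` of `B n` for `1 ≤ i ≤ n - 1` (junk value `1` otherwise). -/
def σ (n i : ℕ) : BraidGroup n :=
  if h : 1 ≤ i ∧ i ≤ n - 1 then PresentedGroup.of (⟨i - 1, by omega⟩ : Fin (n - 1)) else 1

/-- `D n k = σ_{k-1} ⋯ σ_2 σ_1` in `B n`; `D n 1 = 1`. -/
def D (n k : ℕ) : BraidGroup n :=
  (((List.range (k - 1)).reverse).map (fun j => σ n (j + 1))).prod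

/-- `E n k = σ_1 σ_2 ⋯ σ_{k-1}` in `B n`; `E n 1 = 1`. -/
def E (n k : ℕ) : BraidGroup n :=
  ((List.range (k - 1)).map (fun j => σ n (j + 1))).prod

/-- `U n k = D n k * E n k` in `B n`; `U n 1 = 1`. -/
def U (n k : ℕ) : BraidGroup n := D n k * E n k

/-- `δ = σ_{n-1} σ_{n-2} ⋯ σ_1` in `B n`. -/
def delta (n : ℕ) : BraidGroup n := D n n

/-- `Δ = σ_1 (σ_2 σ_1) ⋯ (σ_{n-1} ⋯ σ_1) = D_2 D_3 ⋯ D_n` in `B n`. -/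
def Delta (n : ℕ) : BraidGroup n :=
  ((List.range (n - 1)).map (fun j => D n (j + 2))).prod

end BraidGroup

/-!
Let `W t` be the positive permutation braid of the sequence `r n, …, r 2, r 1`, where `r b` is the
representative of `k * b` modulo `n` in the window `(t, t + n]`. Advancing the window by one
replaces its smallest residue `t + 1` by the largest, `t + 1 + n`, in the same position; on braids
this is `δ * W t = W (t + 1) * U b` with `k * b ≡ t + 1` modulo `n`. Advancing it by `n` does not
change the order of the residues, so `W n = W 0`, while advancing it by `k` rotates the sequence,
so `W k = W 0 * δ`. Hence `W 0` conjugates `δ ^ n` to the product of all the `U b`, and `δ ^ k` to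
`δ` times the product of the `U b` met in the first `k` steps, whose indices are `⌊n * q / k⌋ + 1`
for `0 ≤ q < k`. Since the `U b` commute, neither product depends on the order of its factors.
-/

namespace BraidGroup

theorem σ_commute_σ (n : ℕ) {i j : ℕ} (hij : i + 2 ≤ j) : Commute (σ n i) (σ n j) := by
  unfold σ
  split_ifs with hi hj
  · refine mul_inv_eq_iff_eq_mul.1 (mul_inv_eq_one.1 ?_)
    exact PresentedGroup.one_of_mem (Or.inl ⟨⟨i - 1, by omega⟩, ⟨j - 1, by omega⟩,
      Or.inl (by dsimp only; omega), rfl⟩)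
  · exact Commute.one_right _
  · exact Commute.one_left _
  · exact Commute.one_left _

theorem σ_mul_σ_mul_σ {n i : ℕ} (hi : 1 ≤ i) (hin : i + 1 < n) :
    σ n i * σ n (i + 1) * σ n i = σ n (i + 1) * σ n i * σ n (i + 1) := by
  rw [σ, σ, dif_pos ⟨hi, by omega⟩, dif_pos ⟨by omega, by omega⟩]
  refine mul_inv_eq_one.1 ?_
  exact PresentedGroup.one_of_mem (Or.inr ⟨⟨i - 1, by omega⟩, ⟨i + 1 - 1, by omega⟩,
    Or.inl (by dsimp only; omega), rfl⟩)

/-- The ascending run `σ_a σ_{a+1} ⋯ σ_{b-1}`, equal to `1` when `b ≤ a`. -/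
def asc (n a b : ℕ) : BraidGroup n := ((List.Ico a b).map (σ n)).prod

@[simp]
theorem asc_self (n a : ℕ) : asc n a a = 1 := by simp [asc]

theorem asc_succ (n : ℕ) {a b : ℕ} (hab : a ≤ b) : asc n a (b + 1) = asc n a b * σ n b := by
  simp [asc, List.Ico.succ_top hab]

theorem E_eq_asc (n k : ℕ) : E n k = asc n 1 k := by
  simp [E, asc, List.Ico, List.range'_eq_map_range, Function.comp_def, add_comm]

theorem E_succ {n k : ℕ} (hk : 1 ≤ k) : E n (k + 1) = E n k * σ n k := by
  rw [E_eq_asc, asc_succ n hk, E_eq_asc]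

@[simp]
theorem D_one (n : ℕ) : D n 1 = 1 := rfl

theorem D_succ {n k : ℕ} (hk : 1 ≤ k) : D n (k + 1) = σ n k * D n k := by
  obtain ⟨k, rfl⟩ := Nat.exists_eq_add_of_le' hk
  simp [D, List.range_succ]

@[simp]
theorem U_one (n : ℕ) : U n 1 = 1 := by simp [U, D, E]

theorem commute_asc {n a b : ℕ} {g : BraidGroup n}
    (hg : ∀ i, a ≤ i → i < b → Commute g (σ n i)) : Commute g (asc n a b) := by
  refine Commute.list_prod_right _ _ (List.forall_mem_map.2 fun i hi => ?_)
  exact hg i (List.Ico.mem.1 hi).1 (List.Ico.mem.1 hi).2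

theorem commute_E {n k : ℕ} {g : BraidGroup n}
    (hg : ∀ i, 1 ≤ i → i < k → Commute g (σ n i)) : Commute g (E n k) :=
  E_eq_asc n k ▸ commute_asc hg

theorem commute_D {n k : ℕ} {g : BraidGroup n}
    (hg : ∀ i, 1 ≤ i → i < k → Commute g (σ n i)) : Commute g (D n k) := by
  refine Commute.list_prod_right _ _ (List.forall_mem_map.2 fun i hi => hg _ (by omega) ?_)
  have := List.mem_range.1 (List.mem_reverse.1 hi)
  omega

theorem D_semiconjBy_σ {n k i : ℕ} (hi : 1 ≤ i) (hik : i + 1 < k) (hkn : k ≤ n) :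
    SemiconjBy (D n k) (σ n (i + 1)) (σ n i) := by
  induction k, hik using Nat.le_induction with
  | base =>
    have hcomm : Commute (D n i) (σ n (i + 1)) :=
      (commute_D fun j _ hj => (σ_commute_σ n (by omega)).symm).symm
    rw [D_succ (by omega), D_succ hi, ← mul_assoc]
    refine SemiconjBy.mul_left ?_ hcomm
    rw [SemiconjBy, ← mul_assoc, σ_mul_σ_mul_σ hi (by omega)]
  | succ k hik ih =>
    rw [D_succ (by omega)]
    exact SemiconjBy.mul_left (σ_commute_σ n hik).symm (ih (by omega))

theorem E_semiconjBy_σ {n k i : ℕ} (hi : 1 ≤ i) (hik : i + 1 < k) (hkn : k ≤ n) :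
    SemiconjBy (E n k) (σ n i) (σ n (i + 1)) := by
  induction k, hik using Nat.le_induction with
  | base =>
    have hcomm : Commute (E n i) (σ n (i + 1)) :=
      (commute_E fun j _ hj => (σ_commute_σ n (by omega)).symm).symm
    rw [E_succ (by omega), E_succ hi, mul_assoc]
    refine SemiconjBy.mul_left hcomm ?_
    rw [SemiconjBy, σ_mul_σ_mul_σ hi (by omega), mul_assoc]
  | succ k hik ih =>
    rw [E_succ (by omega)]
    exact SemiconjBy.mul_left (ih (by omega)) (σ_commute_σ n hik).symm

theorem D_semiconjBy_asc {n k a b : ℕ} (ha : 1 ≤ a) (hbk : b < k) (hkn : k ≤ n) :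
    SemiconjBy (D n k) (asc n (a + 1) (b + 1)) (asc n a b) := by
  rcases le_total b a with hba | hab
  · simp [asc, List.Ico.eq_nil_of_le hba, List.Ico.eq_nil_of_le (Nat.succ_le_succ hba)]
  induction b, hab using Nat.le_induction with
  | base => simp
  | succ b hab ih =>
    rw [asc_succ n (by omega), asc_succ n hab]
    exact (ih (by omega)).mul_right (D_semiconjBy_σ (by omega) hbk hkn)

theorem D_mul_E_commute_σ {n k l i : ℕ} (hi : 1 ≤ i) (hik : i + 1 < k) (hil : i + 1 < l)
    (hkn : k ≤ n) (hln : l ≤ n) : Commute (D n k * E n l) (σ n i) :=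
  (D_semiconjBy_σ hi hik hkn).mul_left (E_semiconjBy_σ hi hil hln)

theorem U_commute_U {n a b : ℕ} (ha : a ≤ n) (hb : b ≤ n) : Commute (U n a) (U n b) := by
  wlog hab : a < b generalizing a b
  · rcases (not_lt.1 hab).eq_or_lt with rfl | hba
    · exact Commute.refl _
    · exact (this hb ha hba).symm
  have hσ : ∀ i, 1 ≤ i → i < a → Commute (U n b) (σ n i) := fun i hi hia =>
    D_mul_E_commute_σ hi (by omega) (by omega) hb hb
  exact ((commute_D hσ).mul_right (commute_E hσ)).symm

theorem prod_U_commute_prod_U {n : ℕ} {l l' : List ℕ} (hl : ∀ b ∈ l, b ≤ n)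
    (hl' : ∀ b ∈ l', b ≤ n) : Commute (l.map (U n)).prod (l'.map (U n)).prod :=
  Commute.list_prod_left _ _ <| List.forall_mem_map.2 fun a ha =>
    Commute.list_prod_right _ _ <| List.forall_mem_map.2 fun b hb =>
      U_commute_U (hl a ha) (hl' b hb)

theorem prod_U_eq_of_perm {n : ℕ} {l l' : List ℕ} (h : l.Perm l') (hl : ∀ b ∈ l, b ≤ n) :
    (l.map (U n)).prod = (l'.map (U n)).prod := by
  refine (h.map _).prod_eq' (List.pairwise_of_forall_mem_list ?_)
  simp only [List.forall_mem_map]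
  exact fun a ha b hb => U_commute_U (hl a ha) (hl b hb)

section PermBraid

variable {α β : Type*} [LinearOrder α] [LinearOrder β]

/-- The positive permutation braid of a sequence: its strands cross once for every pair of
entries that increases from left to right. Only the relative order of the entries matters.
Positions are counted from the right, so that the last entry of the list is on strand `1`. -/
def permBraid (n : ℕ) : List α → BraidGroup n
  | [] => 1
  | x :: l => asc n (l.countP (· ≤ x) + 1) (l.length + 1) * permBraid n l

theorem commute_permBraid {n : ℕ} {g : BraidGroup n} (l : List α)
    (hg : ∀ i, 1 ≤ i → i < l.length → Commute g (σ n i)) : Commute g (permBraid n l) := by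
  induction l with
  | nil => exact Commute.one_right _
  | cons x l ih =>
    rw [List.length_cons] at hg
    exact (commute_asc fun i hi hil => hg i (by omega) hil).mul_right
      (ih fun i hi hil => hg i hi (by omega))

theorem permBraid_map (n : ℕ) {f : α → β} (hf : StrictMono f) (l : List α) :
    permBraid n (l.map f) = permBraid n l := by
  induction l with
  | nil => rfl
  | cons x l ih => simp [permBraid, ih, List.countP_map, Function.comp_def, hf.le_iff_le]

theorem permBraid_insert_max_mul_D (n : ℕ) {y : α} {l₂ l₁ : List α}
    (h₁ : ∀ x ∈ l₁, x < y) (h₂ : ∀ x ∈ l₂, x < y) :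
    permBraid n (l₂ ++ y :: l₁) * D n (l₁.length + 1) =
      permBraid n (l₂ ++ l₁) * D n ((l₂ ++ l₁).length + 1) := by
  induction l₂ with
  | nil =>
    have hcount : l₁.countP (· ≤ y) = l₁.length :=
      List.countP_eq_length.2 fun x hx => by simpa using (h₁ x hx).le
    simp [permBraid, hcount]
  | cons x l₂ ih =>
    rw [List.forall_mem_cons] at h₂
    have hcount : (l₂ ++ y :: l₁).countP (· ≤ x) = (l₂ ++ l₁).countP (· ≤ x) := by
      simp [h₂.1]
    have hlength : (l₂ ++ y :: l₁).length = (l₂ ++ l₁).length + 1 := by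
      simp only [List.length_append, List.length_cons, add_assoc]
    have hcomm : Commute (σ n ((l₂ ++ l₁).length + 1)) (permBraid n (l₂ ++ l₁)) :=
      commute_permBraid _ fun i _ hi => (σ_commute_σ n (by omega)).symm
    rw [List.cons_append, List.cons_append, permBraid, permBraid, hcount, hlength, List.length_cons,
      asc_succ n (Nat.succ_le_succ List.countP_le_length), D_succ (k := _ + 1) (by omega),
      mul_assoc, ih h₂.2]
    simp only [mul_assoc]
    rw [hcomm.left_comm]

theorem permBraid_cons_max (n : ℕ) {y : α} {l : List α} (hl : ∀ x ∈ l, x < y) :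
    permBraid n (y :: l) = permBraid n l := by
  simpa using permBraid_insert_max_mul_D n (l₂ := []) hl (by simp)

theorem permBraid_concat_max (n : ℕ) {y : α} {l : List α} (hl : ∀ x ∈ l, x < y) :
    permBraid n (l ++ [y]) = permBraid n l * D n (l.length + 1) := by
  simpa using permBraid_insert_max_mul_D n (l₁ := []) (by simp) hl

theorem delta_mul_permBraid_insert_min {n : ℕ} {x : α} {l₂ l₁ : List α}
    (h₁ : ∀ z ∈ l₁, x < z) (h₂ : ∀ z ∈ l₂, x < z) (hn : (l₂ ++ l₁).length < n) :
    delta n * permBraid n (l₂ ++ x :: l₁) =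
      permBraid n (l₂ ++ l₁) * (delta n * E n (l₁.length + 1)) := by
  induction l₂ with
  | nil =>
    rw [List.nil_append] at hn
    have hcount : l₁.countP (· ≤ x) = 0 :=
      List.countP_eq_zero.2 fun z hz => by simpa using h₁ z hz
    have hcomm : Commute (delta n * E n (l₁.length + 1)) (permBraid n l₁) :=
      commute_permBraid _ fun i hi hil =>
        D_mul_E_commute_σ hi (by omega) (by omega) le_rfl (by omega)
    rw [List.nil_append, List.nil_append, permBraid, hcount, ← E_eq_asc, ← mul_assoc, hcomm.eq]
  | cons z l₂ ih =>
    rw [List.forall_mem_cons] at h₂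
    rw [List.cons_append, List.length_cons] at hn
    have hcount : (l₂ ++ x :: l₁).countP (· ≤ z) = (l₂ ++ l₁).countP (· ≤ z) + 1 := by
      simp [h₂.1.le, add_assoc]
    have hlength : (l₂ ++ x :: l₁).length = (l₂ ++ l₁).length + 1 := by
      simp only [List.length_append, List.length_cons, add_assoc]
    rw [List.cons_append, List.cons_append, permBraid, permBraid, hcount, hlength, ← mul_assoc,
      delta, (D_semiconjBy_asc (by omega) hn le_rfl).eq, mul_assoc, ← delta,
      ih h₂.2 (by omega), mul_assoc]

theorem delta_mul_permBraid {n : ℕ} {x y : α} {l₂ l₁ : List α}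
    (hx₁ : ∀ z ∈ l₁, x < z) (hx₂ : ∀ z ∈ l₂, x < z) (hy₁ : ∀ z ∈ l₁, z < y)
    (hy₂ : ∀ z ∈ l₂, z < y) (hn : (l₂ ++ l₁).length + 1 = n) :
    delta n * permBraid n (l₂ ++ x :: l₁) =
      permBraid n (l₂ ++ y :: l₁) * U n (l₁.length + 1) := by
  rw [delta_mul_permBraid_insert_min hx₁ hx₂ (by omega), U, ← mul_assoc, ← mul_assoc,
    permBraid_insert_max_mul_D n hy₁ hy₂, hn, delta]

end PermBraid

theorem map_perm_of_injOn {α β : Type*} {f : α → β} {l : List α} {l' : List β} (hl : l.Nodup)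
    (hf : Set.InjOn f {x | x ∈ l}) (hmem : ∀ x ∈ l, f x ∈ l') (hlen : l'.length ≤ l.length) :
    (l.map f).Perm l' :=
  List.Subperm.perm_of_length_le
    ((hl.map_on fun _ hx _ hy => hf hx hy).subperm (List.forall_mem_map.2 hmem))
    (by simpa using hlen)

section Residues

variable {n : ℕ} {k : ℤ}

theorem eq_of_mul_modEq_mul (hk : IsCoprime (n : ℤ) k) {b c : ℕ} (hb : b ∈ Set.Icc 1 n)
    (hc : c ∈ Set.Icc 1 n) (hbc : k * b ≡ k * c [ZMOD n]) : b = c := by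
  have hdvd : (n : ℤ) ∣ c - b :=
    hk.dvd_of_dvd_mul_left (by simpa only [mul_sub] using hbc.dvd)
  have := Int.eq_zero_of_abs_lt_dvd hdvd (abs_lt.2 (by grind))
  omega

theorem exists_mul_modEq (hn : (0 : ℤ) < n) (hk : IsCoprime (n : ℤ) k) (x : ℤ) :
    ∃ b : ℕ, b ∈ Set.Icc 1 n ∧ k * b ≡ x [ZMOD n] := by
  obtain ⟨u, v, huv⟩ := hk
  obtain ⟨hlt, hle⟩ := toIocMod_mem_Ioc hn 0 (v * x)
  refine ⟨(toIocMod hn 0 (v * x)).toNat, ⟨by omega, by omega⟩, ?_⟩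
  rw [Int.toNat_of_nonneg hlt.le, ← self_sub_toIocDiv_zsmul, smul_eq_mul, Int.modEq_iff_dvd]
  exact ⟨u * x + k * toIocDiv hn 0 (v * x), by linear_combination -x * huv⟩

theorem map_range_perm_Ico {b : ℕ → ℕ} (hb : ∀ i, b i ∈ Set.Icc 1 n)
    (hkb : ∀ i : ℕ, k * b i ≡ i + 1 [ZMOD n]) :
    ((List.range n).map b).Perm (List.Ico 1 (n + 1)) := by
  refine map_perm_of_injOn List.nodup_range (fun i hi j hj hij => ?_)
    (fun i _ => List.Ico.mem.2 ⟨(hb i).1, Nat.lt_succ_of_le (hb i).2⟩) (by simp)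
  have hmod : (i : ℤ) + 1 ≡ j + 1 [ZMOD n] := (hkb i).symm.trans (hij ▸ hkb j)
  exact (Int.natCast_modEq_iff.1 hmod.add_right_cancel').eq_of_lt_of_lt
    (List.mem_range.1 hi) (List.mem_range.1 hj)

variable (hn : (0 : ℤ) < n)

theorem toIocMod_eq_of_modEq {t x y : ℤ} (hy : y ∈ Set.Ioc t (t + n)) (hxy : x ≡ y [ZMOD n]) :
    toIocMod hn t x = y := by
  obtain ⟨z, hz⟩ := hxy.symm.dvd
  exact (toIocMod_eq_iff hn).2 ⟨hy, z, by rw [smul_eq_mul]; linear_combination hz⟩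

theorem toIocMod_add_one_of_ne {t x : ℤ} (hx : toIocMod hn t x ≠ t + 1) :
    toIocMod hn (t + 1) x = toIocMod hn t x := by
  obtain ⟨hlt, hle⟩ := toIocMod_mem_Ioc hn t x
  exact (toIocMod_eq_iff hn).2 ⟨⟨by omega, by omega⟩, toIocDiv hn t x,
    (toIocMod_add_toIocDiv_zsmul hn t x).symm⟩

theorem toIocMod_mul_injOn (hk : IsCoprime (n : ℤ) k) (t : ℤ) :
    Set.InjOn (fun b : ℕ => toIocMod hn t (k * b)) (Set.Icc 1 n) := by
  intro b hb c hc hbc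
  refine eq_of_mul_modEq_mul hk hb hc (Int.modEq_iff_dvd.2 ?_)
  obtain ⟨z, hz⟩ := (toIocMod_eq_toIocMod hn).1 hbc
  exact ⟨z, by rw [hz, smul_eq_mul, mul_comm]⟩

/-- The list `[r n, …, r 2, r 1]`, where `r b` is the representative of `k * b` modulo `n` in the
window `(t, t + n]`. The conjugating braid is the permutation braid of `residues hn k 0`. -/
noncomputable def residues (k t : ℤ) : List ℤ :=
  ((List.Ico 1 (n + 1)).map fun b : ℕ => toIocMod hn t (k * b)).reverse

theorem residues_eq_append (k t : ℤ) {b : ℕ} (hb : b ∈ Set.Icc 1 n) :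
    residues hn k t =
      ((List.Ico (b + 1) (n + 1)).map fun c : ℕ => toIocMod hn t (k * c)).reverse ++
        toIocMod hn t (k * b) ::
          ((List.Ico 1 b).map fun c : ℕ => toIocMod hn t (k * c)).reverse := by
  rw [residues, ← List.Ico.append_consecutive hb.1 (Nat.le_succ_of_le hb.2),
    List.Ico.eq_cons (Nat.lt_succ_of_le hb.2)]
  simp

theorem delta_mul_permBraid_residues (hk : IsCoprime (n : ℤ) k) {t : ℤ} {b : ℕ}
    (hb : b ∈ Set.Icc 1 n) (hkb : k * b ≡ t + 1 [ZMOD n]) :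
    delta n * permBraid n (residues hn k t) =
      permBraid n (residues hn k (t + 1)) * U n b := by
  have hmin : toIocMod hn t (k * b) = t + 1 :=
    toIocMod_eq_of_modEq hn ⟨by omega, by omega⟩ hkb
  have hmax : toIocMod hn (t + 1) (k * b) = t + 1 + n :=
    toIocMod_eq_of_modEq hn ⟨by omega, le_rfl⟩ (hkb.trans (by simp [Int.ModEq]))
  have hne {c : ℕ} (hc : c ∈ Set.Icc 1 n) (hcb : c ≠ b) : toIocMod hn t (k * c) ≠ t + 1 :=
    fun h => hcb (toIocMod_mul_injOn hn hk t hc hb (h.trans hmin.symm))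
  have hbetween {l : List ℕ} (hl : ∀ c ∈ l, c ∈ Set.Icc 1 n ∧ c ≠ b) :
      ∀ z ∈ (l.map fun c : ℕ => toIocMod hn t (k * c)).reverse, t + 1 < z ∧ z < t + 1 + n := by
    simp only [List.mem_reverse, List.forall_mem_map]
    intro c hc
    obtain ⟨hlt, hle⟩ := toIocMod_mem_Ioc hn t (k * c)
    have := hne (hl c hc).1 (hl c hc).2
    omega
  have hadvance {l : List ℕ} (hl : ∀ c ∈ l, c ∈ Set.Icc 1 n ∧ c ≠ b) :
      (l.map fun c : ℕ => toIocMod hn (t + 1) (k * c)) =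
        l.map fun c : ℕ => toIocMod hn t (k * c) :=
    List.map_congr_left fun c hc => toIocMod_add_one_of_ne hn (hne (hl c hc).1 (hl c hc).2)
  have hbelow : ∀ c ∈ List.Ico 1 b, c ∈ Set.Icc 1 n ∧ c ≠ b := by grind [List.Ico.mem]
  have habove : ∀ c ∈ List.Ico (b + 1) (n + 1), c ∈ Set.Icc 1 n ∧ c ≠ b := by
    grind [List.Ico.mem]
  rw [residues_eq_append hn k t hb, residues_eq_append hn k (t + 1) hb, hmin, hmax,
    hadvance hbelow, hadvance habove,
    delta_mul_permBraid (fun z hz => (hbetween hbelow z hz).1)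
      (fun z hz => (hbetween habove z hz).1) (fun z hz => (hbetween hbelow z hz).2)
      (fun z hz => (hbetween habove z hz).2) (by grind [List.Ico.length]),
    List.length_reverse, List.length_map, List.Ico.length, Nat.sub_add_cancel hb.1]

theorem delta_pow_mul_permBraid_residues (hk : IsCoprime (n : ℤ) k) {b : ℕ → ℕ}
    (hb : ∀ i, b i ∈ Set.Icc 1 n) (hkb : ∀ i : ℕ, k * b i ≡ i + 1 [ZMOD n]) (t : ℕ) :
    delta n ^ t * permBraid n (residues hn k 0) =
      permBraid n (residues hn k t) * (((List.range t).map b).reverse.map (U n)).prod := by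
  induction t with
  | zero => simp
  | succ t ih =>
    rw [pow_succ', mul_assoc, ih, ← mul_assoc,
      delta_mul_permBraid_residues hn hk (hb t) (hkb t), List.range_succ]
    simp [mul_assoc]

theorem permBraid_residues_period (k : ℤ) :
    permBraid n (residues hn k n) = permBraid n (residues hn k 0) := by
  have hshift : residues hn k n = (residues hn k 0).map ((n : ℤ) + ·) := by
    simp only [residues, List.map_reverse, List.map_map, Function.comp_def,
      ← toIocMod_add_left', add_zero]
  rw [hshift, permBraid_map n add_right_strictMono]

/-- Moving the window by `k` takes the largest residue from the front of the list to its end and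
adds `k` to all residues. -/
theorem permBraid_residues_slope (hk : IsCoprime (n : ℤ) k) :
    permBraid n (residues hn k k) = permBraid n (residues hn k 0) * delta n := by
  have hn1 : 1 ≤ n := by omega
  obtain ⟨l, hl⟩ : ∃ l, l = ((List.Ico 1 n).map fun c : ℕ => toIocMod hn 0 (k * c)).reverse :=
    ⟨_, rfl⟩
  have hfront : toIocMod hn 0 (k * n) = n :=
    toIocMod_eq_of_modEq hn ⟨hn, by simp⟩ (by simp [Int.ModEq])
  have hzero : residues hn k 0 = (n : ℤ) :: l := by
    simp [residues_eq_append hn k 0 ⟨hn1, le_rfl⟩, hfront, hl]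
  have hslope : residues hn k k = l.map (k + ·) ++ [k + (n : ℤ)] := by
    have hshift (c : ℕ) : toIocMod hn k (k * (1 + c)) = k + toIocMod hn 0 (k * c) := by
      rw [mul_add, mul_one, add_comm k, toIocMod_add_right_eq_add, sub_self, add_comm]
    rw [residues_eq_append hn k k ⟨le_rfl, hn1⟩, ← List.Ico.map_add 1 n 1, hl]
    simp [Function.comp_def, hshift]
  have hmax : ∀ z ∈ l, z < (n : ℤ) := by
    simp only [hl, List.mem_reverse, List.forall_mem_map, List.Ico.mem]
    intro c hc
    have hle := toIocMod_le_right hn 0 (k * c)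
    have hne : toIocMod hn 0 (k * c) ≠ n := fun h =>
      hc.2.ne (toIocMod_mul_injOn hn hk 0 ⟨hc.1, hc.2.le⟩ ⟨hn1, le_rfl⟩ (h.trans hfront.symm))
    omega
  have hlength : l.length + 1 = n := by simp [hl, Nat.sub_add_cancel hn1]
  rw [hslope, hzero, permBraid_cons_max n hmax, permBraid_concat_max n (by simpa using hmax),
    permBraid_map n add_right_strictMono, List.length_map, hlength, delta]

theorem delta_pow_self_semiconjBy (hk : IsCoprime (n : ℤ) k) :
    SemiconjBy (permBraid n (residues hn k 0)) ((List.Ico 1 (n + 1)).map (U n)).prod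
      (delta n ^ n) := by
  choose b hb hkb using fun i : ℕ => exists_mul_modEq hn hk (i + 1)
  rw [SemiconjBy, delta_pow_mul_permBraid_residues hn hk hb hkb, permBraid_residues_period,
    prod_U_eq_of_perm ((map_range_perm_Ico hb hkb).symm.trans (List.reverse_perm _).symm)
      (by grind [List.Ico.mem])]

end Residues

section Exponents

variable {n k : ℕ}

theorem mul_div_add_one_mem_Icc {q : ℕ} (hn : 0 < n) (hq : q < k) :
    n * q / k + 1 ∈ Set.Icc 1 n :=
  ⟨Nat.succ_pos _, Nat.div_lt_of_lt_mul
    (by simpa only [mul_comm k] using Nat.mul_lt_mul_of_pos_left hq hn)⟩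

theorem map_range_perm_div (hk : 0 < k) (hcop : n.Coprime k) {b : ℕ → ℕ}
    (hb : ∀ i, b i ∈ Set.Icc 1 n) (hkb : ∀ i : ℕ, (k : ℤ) * b i ≡ i + 1 [ZMOD n]) :
    ((List.range k).map b).Perm ((List.range k).map fun q => n * q / k + 1) := by
  have hmod_lt (q : ℕ) : n * q % k < k := Nat.mod_lt _ hk
  have hperm : ((List.range k).map fun q => k - 1 - n * q % k).Perm (List.range k) := by
    refine map_perm_of_injOn List.nodup_range (fun p hp q hq hpq => ?_) ?_ le_rfl
    · have hmod : n * p ≡ n * q [MOD k] := by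
        have := hmod_lt p
        have := hmod_lt q
        unfold Nat.ModEq
        omega
      exact (hmod.cancel_left_of_coprime hcop.symm).eq_of_lt_of_lt
        (List.mem_range.1 hp) (List.mem_range.1 hq)
    · grind
  -- `k * (n * q / k + 1) = n * q + (k - n * q % k)`, so `n * q / k + 1` solves the congruence
  -- defining `b i` for `i + 1 = k - n * q % k`.
  have hb_div : ∀ q ∈ List.range k, b (k - 1 - n * q % k) = n * q / k + 1 := by
    intro q hq
    have hq_mem := mul_div_add_one_mem_Icc ((hb 0).1.trans (hb 0).2) (List.mem_range.1 hq)
    refine eq_of_mul_modEq_mul (Nat.isCoprime_iff_coprime.2 hcop) (hb _) hq_mem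
      ((hkb _).trans (Int.modEq_iff_dvd.2 ⟨q, ?_⟩))
    have hidx : ((k - 1 - n * q % k : ℕ) : ℤ) + 1 = k - (n * q % k : ℕ) := by
      have := hmod_lt q
      omega
    have hsplit : ((k * (n * q / k) : ℕ) : ℤ) + (n * q % k : ℕ) = n * q := by
      exact_mod_cast Nat.div_add_mod (n * q) k
    rw [hidx]
    push_cast at hsplit ⊢
    linear_combination hsplit
  rw [← List.map_congr_left hb_div]
  simpa only [List.map_map, Function.comp_def] using (hperm.map b).symm

theorem delta_pow_semiconjBy (hn : (0 : ℤ) < n) (hk : 0 < k) (hcop : n.Coprime k) :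
    SemiconjBy (permBraid n (residues hn k 0))
      (delta n * (((List.range k).map fun q => n * q / k + 1).map (U n)).prod) (delta n ^ k) := by
  have hk' := Nat.isCoprime_iff_coprime.2 hcop
  choose b hb hkb using fun i : ℕ => exists_mul_modEq hn hk' (i + 1)
  rw [SemiconjBy, delta_pow_mul_permBraid_residues hn hk' hb hkb, permBraid_residues_slope hn hk',
    mul_assoc, prod_U_eq_of_perm ((List.reverse_perm _).trans (map_range_perm_div hk hcop hb hkb))
      (by grind)]

theorem prod_U_Ico (hn : 0 < n) :
    ((List.Ico 1 (n + 1)).map (U n)).prod =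
      ((List.range (n - 1)).map fun j => U n (j + 2)).prod := by
  rw [List.Ico.eq_cons (by omega), List.map_cons, List.prod_cons, U_one, one_mul]
  simp [List.Ico, List.range'_eq_map_range, Function.comp_def, add_comm]

theorem ceil_natCast_div_of_not_dvd {x : ℕ} (hk : 0 < k) (hkx : ¬ k ∣ x) :
    ⌈(x : ℚ) / k⌉ = (x / k + 1 : ℕ) := by
  have hk' : (0 : ℚ) < k := Nat.cast_pos.2 hk
  have hlt : k * (x / k) < x := (Nat.mul_div_le x k).lt_of_ne fun h => hkx ⟨_, h.symm⟩
  have hle : x ≤ k * (x / k + 1) := (Nat.lt_mul_div_succ x hk).le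
  rw [Int.ceil_eq_iff, lt_div_iff₀' hk', div_le_iff₀' hk']
  push_cast
  rw [add_sub_cancel_right]
  exact ⟨mod_cast hlt, mod_cast hle⟩

theorem prod_U_div (hk : 0 < k) (hcop : n.Coprime k) {a : ℕ → ℕ}
    (ha : ∀ i, 1 ≤ i → i ≤ k - 1 → (a i : ℤ) = ⌈((n : ℚ) * i) / k⌉) :
    (((List.range k).map fun q => n * q / k + 1).map (U n)).prod =
      ((List.range (k - 1)).map fun j => U n (a (j + 1))).prod := by
  have ha_div : ∀ j ∈ List.range (k - 1), n * (j + 1) / k + 1 = a (j + 1) := by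
    intro j hj
    have hjk : j + 1 < k := by grind
    have hndvd : ¬ k ∣ n * (j + 1) := fun h =>
      Nat.not_dvd_of_pos_of_lt j.succ_pos hjk (hcop.symm.dvd_of_dvd_mul_left h)
    have h := ha (j + 1) (by omega) (by omega)
    rw [← Nat.cast_mul, ceil_natCast_div_of_not_dvd hk hndvd] at h
    exact_mod_cast h.symm
  obtain ⟨k, rfl⟩ := Nat.exists_eq_add_of_le' hk
  rw [List.range_succ_eq_map, List.map_cons, List.map_cons, List.prod_cons, mul_zero, Nat.zero_div,
    zero_add, U_one, one_mul, List.map_map, List.map_map]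
  exact congrArg List.prod (List.map_congr_left fun j hj => congrArg (U n) (ha_div j hj))

end Exponents

end BraidGroup

theorem delta_pow_s_conj_general (n s m k : ℕ) (hn : 0 < n) (hcop : Nat.Coprime n s)
    (hs : s = n * m + k) (hk : 0 < k)
    (a : ℕ → ℕ) (ha : ∀ i, 1 ≤ i → i ≤ k - 1 → (a i : ℤ) = ⌈((n : ℚ) * i) / k⌉) :
    ∃ x : BraidGroup n,
      x⁻¹ * (BraidGroup.delta n) ^ s * x =
        BraidGroup.delta n *
          (((List.range (n - 1)).map (fun j => BraidGroup.U n (j + 2))).prod) ^ m *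
          ((List.range (k - 1)).map (fun j => BraidGroup.U n (a (j + 1)))).prod := by
  have hn' : (0 : ℤ) < n := Nat.cast_pos.2 hn
  have hcop' : n.Coprime k := by simpa [hs] using hcop
  rw [← BraidGroup.prod_U_Ico hn, ← BraidGroup.prod_U_div hk hcop' ha]
  set T := ((List.Ico 1 (n + 1)).map (BraidGroup.U n)).prod
  set P := (((List.range k).map fun q => n * q / k + 1).map (BraidGroup.U n)).prod
  have hcomm : Commute T P := BraidGroup.prod_U_commute_prod_U
    (fun b hb => Nat.le_of_lt_succ (List.Ico.mem.1 hb).2)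
    (List.forall_mem_map.2 fun q hq =>
      (BraidGroup.mul_div_add_one_mem_Icc hn (List.mem_range.1 hq)).2)
  have hconj : SemiconjBy (BraidGroup.permBraid n (BraidGroup.residues hn' k 0))
      (BraidGroup.delta n * T ^ m * P) (BraidGroup.delta n ^ s) := by
    rw [hs, add_comm, pow_add, pow_mul, mul_assoc, (hcomm.pow_left m).eq, ← mul_assoc]
    exact (BraidGroup.delta_pow_semiconjBy hn' hk hcop').mul_right
      ((BraidGroup.delta_pow_self_semiconjBy hn' (Nat.isCoprime_iff_coprime.2 hcop')).pow_right m)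
  exact ⟨_, by rw [mul_assoc, ← hconj.eq, inv_mul_cancel_left]⟩

/-- If `n, s` are relatively prime with `2 ≤ n < s` and `s = n·m + k` with `m ≥ 1`,
`1 ≤ k ≤ n-1`, then in `B n` the element `δ^s` is conjugate to
`δ · (U_2 U_3 ⋯ U_n)^m · U_{a_1} ⋯ U_{a_{k-1}}` where `a_i = ⌈n·i/k⌉`. -/
theorem delta_pow_s_conj (n s m k : ℕ) (hn : 2 ≤ n) (hns : n < s)
    (hcop : Nat.Coprime n s) (hs : s = n * m + k) (hm : 1 ≤ m) (hk1 : 1 ≤ k)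
    (hkn : k ≤ n - 1)
    (a : ℕ → ℕ) (ha : ∀ i, 1 ≤ i → i ≤ k - 1 → (a i : ℤ) = ⌈((n : ℚ) * i) / k⌉) :
    ∃ x : BraidGroup n,
      x⁻¹ * (BraidGroup.delta n) ^ s * x =
        BraidGroup.delta n *
          (((List.range (n - 1)).map (fun j => BraidGroup.U n (j + 2))).prod) ^ m *
          ((List.range (k - 1)).map (fun j => BraidGroup.U n (a (j + 1)))).prod := by
  exact delta_pow_s_conj_general n s m k (by omega) hcop hs hk1 a ha
end

section
/- In the braid group B_n, for every k with 2 ≤ k ≤ n, the element U_k commutes with σ_i for all 1 ≤ i ≤ k−2. -/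
/-!
Conjugation by `E_k = σ_1 ⋯ σ_{k-1}` sends `σ_i` to `σ_{i+1}`: the factors after `σ_i σ_{i+1}`
commute with `σ_i`, those before commute with `σ_{i+1}`, and the braid relation turns
`σ_i σ_{i+1} σ_i` into `σ_{i+1} σ_i σ_{i+1}`. Read in the opposite monoid, the same statement says
that conjugation by `D_k` sends `σ_{i+1}` back to `σ_i`, so `U_k = D_k E_k` commutes with `σ_i`.
-/

section Monoid

variable {M : Type*} [Monoid M] {s : ℕ → M} {i m : ℕ}

theorem semiconjBy_prod_map_range
    (hcomm : ∀ a b, a + 2 ≤ b → b < m → Commute (s a) (s b))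
    (hbraid : s i * s (i + 1) * s i = s (i + 1) * s i * s (i + 1)) (him : i + 1 < m) :
    SemiconjBy ((List.range m).map s).prod (s i) (s (i + 1)) := by
  obtain ⟨r, rfl⟩ := Nat.exists_eq_add_of_le him
  have hlow : Commute ((List.range i).map s).prod (s (i + 1)) := by
    refine Commute.list_prod_left _ _ (List.forall_mem_map.2 fun a ha => ?_)
    have hai := List.mem_range.1 ha
    exact hcomm a (i + 1) (by omega) him
  have hmid : SemiconjBy (s i * s (i + 1)) (s i) (s (i + 1)) := by
    rw [SemiconjBy, hbraid, mul_assoc]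
  have hhigh : Commute ((List.range r).map fun j => s (i + 2 + j)).prod (s i) := by
    refine Commute.list_prod_left _ _ (List.forall_mem_map.2 fun b hb => ?_)
    have hbr := List.mem_range.1 hb
    exact (hcomm i (i + 2 + b) (by omega) (by omega)).symm
  have hsplit : ((List.range (i + 2 + r)).map s).prod =
      ((List.range i).map s).prod * (s i * s (i + 1)) *
        ((List.range r).map fun j => s (i + 2 + j)).prod := by
    rw [List.range_add, List.map_append, List.prod_append, List.prod_range_succ,
      List.prod_range_succ, List.map_map, mul_assoc _ (s i)]
    rfl
  exact hsplit ▸ (hlow.semiconjBy.mul_left hmid).mul_left hhigh.semiconjBy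

theorem semiconjBy_prod_map_reverse_range
    (hcomm : ∀ a b, a + 2 ≤ b → b < m → Commute (s a) (s b))
    (hbraid : s i * s (i + 1) * s i = s (i + 1) * s i * s (i + 1)) (him : i + 1 < m) :
    SemiconjBy ((List.range m).reverse.map s).prod (s (i + 1)) (s i) := by
  have hop : SemiconjBy ((List.range m).map (MulOpposite.op ∘ s)).prod
      (MulOpposite.op (s i)) (MulOpposite.op (s (i + 1))) := by
    refine semiconjBy_prod_map_range (s := MulOpposite.op ∘ s)
      (fun a b hab hbm => (hcomm a b hab hbm).op) ?_ him
    simpa only [Function.comp_apply, ← MulOpposite.op_mul, MulOpposite.op_inj, ← mul_assoc]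
      using hbraid
  rw [← MulOpposite.semiconjBy_op, MulOpposite.op_list_prod, List.map_map, List.map_reverse,
    List.reverse_reverse]
  exact hop

end Monoid

namespace BraidGroup

variable {n i j k : ℕ}

theorem commute_σ (hij : i + 2 ≤ j) : Commute (σ n i) (σ n j) := by
  unfold σ
  split_ifs
  · refine commutatorElement_eq_one_iff_commute.1 (PresentedGroup.one_of_mem (Or.inl ?_))
    exact ⟨⟨i - 1, by omega⟩, ⟨j - 1, by omega⟩, Or.inl (by dsimp only; omega), rfl⟩
  all_goals simp only [Commute.one_left, Commute.one_right]

theorem σ_braid (hi : 1 ≤ i) (hin : i + 1 < n) :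
    σ n i * σ n (i + 1) * σ n i = σ n (i + 1) * σ n i * σ n (i + 1) := by
  rw [σ, σ, dif_pos ⟨hi, by omega⟩, dif_pos ⟨by omega, by omega⟩]
  refine PresentedGroup.mk_eq_mk_of_mul_inv_mem (Or.inr ?_)
  exact ⟨⟨i - 1, by omega⟩, ⟨i, by omega⟩, Or.inl (by dsimp only; omega), rfl⟩

theorem semiconjBy_E (hi : 1 ≤ i) (hik : i + 1 < k) (hin : i + 1 < n) :
    SemiconjBy (E n k) (σ n i) (σ n (i + 1)) := by
  obtain ⟨i, rfl⟩ := Nat.exists_eq_add_of_le' hi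
  exact semiconjBy_prod_map_range (s := fun j => σ n (j + 1))
    (fun a b hab _ => commute_σ (by omega)) (σ_braid hi hin) (by omega)

theorem semiconjBy_D (hi : 1 ≤ i) (hik : i + 1 < k) (hin : i + 1 < n) :
    SemiconjBy (D n k) (σ n (i + 1)) (σ n i) := by
  obtain ⟨i, rfl⟩ := Nat.exists_eq_add_of_le' hi
  exact semiconjBy_prod_map_reverse_range (s := fun j => σ n (j + 1))
    (fun a b hab _ => commute_σ (by omega)) (σ_braid hi hin) (by omega)

end BraidGroup

/-- **Lemma (DEU (ii)).** In `B n`, for `2 ≤ k ≤ n`, the element `U_k` commutes with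
`σ_i` for all `1 ≤ i ≤ k - 2`. -/
theorem U_sigma_comm (n k : ℕ) (hk2 : 2 ≤ k) (hkn : k ≤ n)
    (i : ℕ) (hi1 : 1 ≤ i) (hi : i ≤ k - 2) :
    BraidGroup.U n k * BraidGroup.σ n i = BraidGroup.σ n i * BraidGroup.U n k := by
  have hE : SemiconjBy (BraidGroup.E n k) (BraidGroup.σ n i) (BraidGroup.σ n (i + 1)) :=
    BraidGroup.semiconjBy_E hi1 (by omega) (by omega)
  have hD : SemiconjBy (BraidGroup.D n k) (BraidGroup.σ n (i + 1)) (BraidGroup.σ n i) :=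
    BraidGroup.semiconjBy_D hi1 (by omega) (by omega)
  exact (hD.mul_left hE).eq
end
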